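/- Let D > 0 and U have canonical parameters (π/4, π/4, π/4) (the swap gate) and let the coupling have canonical parameters D·(2,1,−1). Then the minimal T ≥ 0 such that (π/4,π/4,π/4) ≺_s DT·(2,1,−1) or the s-ordered version of (π/4−π/2, π/4, π/4) is ≺_s DT·(2,1,−1) equals 3π/(16D). -/

import Mathlib

open scoped BigOperators

/-- The decreasing rearrangement of a vector in `ℝ^k`. -/
noncomputable def descSort {k : ℕ} (x : Fin k → ℝ) : Fin k → ℝ :=
  fun i => (x ∘ Tuple.sort x) i.rev

/-- Sum of the `m` largest entries of `x`, i.e. partial sum of the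
decreasing rearrangement. -/
noncomputable def partSum {k : ℕ} (x : Fin k → ℝ) (m : ℕ) : ℝ :=
  ∑ i : Fin k, if (i : ℕ) < m then descSort x i else 0

/-- `Majorized x y` means `x ≺ y`. -/
noncomputable def Majorized {k : ℕ} (x y : Fin k → ℝ) : Prop :=
  (∀ m : ℕ, m < k → partSum x m ≤ partSum y m) ∧ (∑ i, x i = ∑ i, y i)

/-- The s-ordered version of a vector in `ℝ³`. -/
noncomputable def sOrder (v : Fin 3 → ℝ) : Fin 3 → ℝ :=
  ![descSort (fun i => |v i|) 0, descSort (fun i => |v i|) 1,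
    Real.sign (v 0 * v 1 * v 2) * descSort (fun i => |v i|) 2]

/-- `SMajorized x y` means `x ≺ₛ y` (s-majorization on `ℝ³`). -/
noncomputable def SMajorized (x y : Fin 3 → ℝ) : Prop :=
  sOrder x 0 ≤ sOrder y 0 ∧
  sOrder x 0 + sOrder x 1 + sOrder x 2 ≤ sOrder y 0 + sOrder y 1 + sOrder y 2 ∧
  sOrder x 0 + sOrder x 1 - sOrder x 2 ≤ sOrder y 0 + sOrder y 1 - sOrder y 2

theorem descSort_of_antitone {k : ℕ} (x : Fin k → ℝ) (hx : Antitone x) : descSort x = x := by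
  have h : x ∘ Tuple.sort x = x ∘ (Fin.revPerm : Equiv.Perm (Fin k)) := by
    apply Tuple.unique_monotone (Tuple.monotone_sort x)
    intro i j hij
    exact hx (by simpa using hij)
  funext i
  have h2 := congrFun h i.rev
  simpa [descSort] using h2

theorem antitone_three (a b c : ℝ) (h1 : b ≤ a) (h2 : c ≤ b) : Antitone ![a, b, c] := by
  intro i j hij
  fin_cases i <;> fin_cases j <;> simp_all <;> linarith

theorem sOrder_eq (v : Fin 3 → ℝ) (a b c : ℝ) (h0 : |v 0| = a) (h1 : |v 1| = b) (h2 : |v 2| = c)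
    (hab : b ≤ a) (hbc : c ≤ b) : sOrder v = ![a, b, Real.sign (v 0 * v 1 * v 2) * c] := by
  have h : (fun i => |v i|) = ![a, b, c] := by
    funext i
    fin_cases i <;> simp [h0, h1, h2]
  unfold sOrder
  rw [h, descSort_of_antitone _ (antitone_three a b c hab hbc)]
  simp

open Real in
theorem sOrder_swap1 : sOrder ![π / 4, π / 4, π / 4] = ![π / 4, π / 4, π / 4] := by
  have hp := Real.pi_pos
  have ha : |π / 4| = π / 4 := abs_of_pos (by positivity)
  rw [sOrder_eq _ (π / 4) (π / 4) (π / 4) ha ha ha le_rfl le_rfl]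
  rw [Real.sign_of_pos (by simp; positivity), one_mul]

open Real in
theorem sOrder_swap2 : sOrder ![π / 4 - π / 2, π / 4, π / 4] = ![π / 4, π / 4, -(π / 4)] := by
  have hp := Real.pi_pos
  have ha : |π / 4| = π / 4 := abs_of_pos (by positivity)
  have hb : |π / 4 - π / 2| = π / 4 := by
    rw [abs_of_neg (by linarith)]; ring
  rw [sOrder_eq _ (π / 4) (π / 4) (π / 4) hb ha ha le_rfl le_rfl]
  rw [Real.sign_of_neg, neg_one_mul]
  have : 0 < (π / 4) * (π / 4) * (π / 4) := by positivity
  simp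
  nlinarith

theorem sOrder_coupling (s : ℝ) (hs : 0 ≤ s) :
    sOrder (fun i => s * (![2, 1, -1] i)) = ![2 * s, s, -s] := by
  rw [sOrder_eq _ (2 * s) s s (by simp [abs_of_nonneg hs, mul_comm])
    (by simp [abs_of_nonneg hs]) (by simp [abs_of_nonneg hs]) (by linarith) le_rfl]
  rcases hs.eq_or_lt with h | h
  · simp [← h]
  · rw [Real.sign_of_neg, neg_one_mul]
    have : 0 < s * s * s := by positivity
    simp
    nlinarith

open Real in
/-- The minimum time to generate the swap gate with coupling of canonical
parameters `D·(2,1,−1)` is `3π/(16D)`. -/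
theorem swap_gate_minimum_time (D : ℝ) (hD : 0 < D) :
    IsLeast {T : ℝ | 0 ≤ T ∧
      (SMajorized ![π / 4, π / 4, π / 4] (fun i => D * T * (![2, 1, -1] i)) ∨
       SMajorized ![π / 4 - π / 2, π / 4, π / 4]
         (fun i => D * T * (![2, 1, -1] i)))}
      (3 * π / (16 * D)) := by
  have hp := Real.pi_pos
  constructor
  · refine ⟨by positivity, Or.inr ?_⟩
    have e : D * (3 * π / (16 * D)) = 3 * π / 16 := by field_simp
    unfold SMajorized
    rw [e, sOrder_swap2, sOrder_coupling _ (by positivity)]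
    simp only [Matrix.cons_val]
    refine ⟨?_, ?_, ?_⟩ <;> linarith
  · rintro T ⟨hT, h⟩
    rw [div_le_iff₀ (by positivity)]
    have hs : 0 ≤ D * T := by positivity
    unfold SMajorized at h
    rw [sOrder_swap1, sOrder_swap2, sOrder_coupling _ hs] at h
    simp only [Matrix.cons_val] at h
    rcases h with ⟨h1, h2, h3⟩ | ⟨h1, h2, h3⟩ <;> nlinarith
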